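/- Let F be a field, f ∈ F[x] a nonconstant polynomial with derivative f' ≠ 0, t transcendental over F, and let α be a root of f − t (in an algebraic closure of the rational function field F(t)). Let L be the set of all normal polynomials h ∈ F[x] such that f = g ∘ h for some g ∈ F[x], and let M be the set of all intermediate fields of the extension F(α)/F(t). Then the map L → M sending h to F(h(α)) is a bijection. -/

import Mathlib

/-!
Since `f(α) = t`, the element `α` is transcendental over `F`, and `F(t)(β) = F(β)` whenever `t` is a
polynomial in `β` (`restrictScalars_adjoin_eq`). So the theorem is about fields `E` with
`F(f(α)) ≤ E ≤ F(α)`.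

Injectivity: if a nonzero polynomial `k` satisfies `k(α) ∈ F(h(α))`, then clearing denominators in
`k(α) = A(h(α)) / B(h(α))` and comparing degrees shows that `deg h` divides `deg k`
(`natDegree_dvd_of_mem_adjoin`). Two normal polynomials `h, k` with `F(h(α)) = F(k(α))` thus have
equal degree, so `h - k` has smaller degree, still divisible by `deg h`: it is constant, hence `0`.

Surjectivity: let `m` be the minimal polynomial of `α` over `E`, of degree `r`. After scaling `f` to
be monic, `m` divides `f(x) - f(α)`, and `F[α]` is integrally closed, so `m = M(α, x)` for a factor
`M(y, x)` of `f(x) - f(y)` in `F[y][x]`. A total degree count (`natDegree_eval_zero_of_mul_eq`)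
shows that `M(y, 0)` has degree exactly `r` in `y`. Normalizing `M(y, 0)` gives a normal polynomial
`h` of degree `r` with `h(α) ∈ E`. Since `α` satisfies `h(x) = h(α)`, which has degree
`r = [F(α) : E]`, it follows that `F(h(α)) = E` (`adjoin_eq_of_natDegree_eq`); and expanding `f` in powers of
`h` and using that `α` has no relation of degree `< r` over `E` gives `f = g ∘ h`
(`exists_eq_comp`).
-/

open Polynomial

/-- The algebraic closure of the rational function field `F(t)`. -/
noncomputable abbrev FuncFieldClosure (F : Type*) [Field F] : Type _ :=
  AlgebraicClosure (RatFunc F)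

section Generic

variable {F Ω : Type*} [Field F] [Field Ω] [Algebra F Ω]

/-! ### Factors of `f(x) - f(y)` -/

/-- The substitution `x ↦ z y`, `y ↦ (1 - z) y` from `F[y][x]` to `F[z][y]`. The degree in `y` of
the image is controlled by total degree, and `z = 0`, `z = 1` recover `M(y, 0)` and `M(0, y)`. -/
noncomputable def lineSubst (F : Type*) [Field F] : F[X][X] →+* F[X][X] :=
  eval₂RingHom (eval₂RingHom (C.comp C) ((1 - C X) * X)) (C X * X)

lemma lineSubst_at_zero (M : F[X][X]) :
    (lineSubst F M).map (evalRingHom 0) = M.eval 0 := by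
  have : (mapRingHom (evalRingHom (0 : F))).comp (lineSubst F) = evalRingHom 0 := by
    apply Polynomial.ringHom_ext'
    · apply Polynomial.ringHom_ext' <;> [ext; skip] <;> simp [lineSubst]
    · simp [lineSubst]
  simpa using congrArg (fun φ => φ M) this

lemma lineSubst_at_one (M : F[X][X]) :
    (lineSubst F M).map (evalRingHom 1) = M.map (evalRingHom 0) := by
  have : (mapRingHom (evalRingHom (1 : F))).comp (lineSubst F) =
      mapRingHom (evalRingHom 0) := by
    apply Polynomial.ringHom_ext'
    · apply Polynomial.ringHom_ext' <;> [ext; skip] <;> simp [lineSubst]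
    · simp [lineSubst]
  simpa using congrArg (fun φ => φ M) this

lemma natDegree_lineSubst_le (f : F[X]) :
    (lineSubst F (f.map C - C f)).natDegree ≤ f.natDegree := by
  have h1 : lineSubst F (f.map C) = (f.map C).comp (C X * X) := by
    simp only [lineSubst, coe_eval₂RingHom, eval₂_map, comp]
    congr 1
    ext; simp
  have h2 : lineSubst F (C f) = (f.map C).comp ((1 - C X) * X) := by
    simp only [lineSubst, coe_eval₂RingHom, eval₂_map, comp, eval₂_C]
  have h3 : ∀ p : F[X][X], p.natDegree ≤ 1 → ((f.map C).comp p).natDegree ≤ f.natDegree := by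
    intro p hp
    rw [natDegree_comp, natDegree_map_eq_of_injective C_injective]
    nlinarith
  rw [map_sub, h1, h2]
  refine (natDegree_sub_le _ _).trans (max_le (h3 _ ?_) (h3 _ ?_))
  · compute_degree
  · rw [← C_1, ← C_sub]
    compute_degree

/-- A factor `M(y, x)` of `f(x) - f(y)`, monic in `x`, has constant coefficient `M(y, 0)` of degree
in `y` equal to its degree in `x`. -/
lemma natDegree_eval_zero_of_mul_eq {f : F[X]} (hf : 0 < f.natDegree) {M Q : F[X][X]}
    (hM : M.Monic) (h : M * Q = f.map C - C f) : (M.eval 0).natDegree = M.natDegree := by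
  have hf0 : (f - C (f.eval 0)).natDegree = f.natDegree := natDegree_sub_C
  have hf1 : (C (f.eval 0) - f).natDegree = f.natDegree := by rw [natDegree_sub, hf0]
  have e0 : M.eval 0 * Q.eval 0 = C (f.eval 0) - f := by
    have := congrArg (eval 0) h
    rw [eval_mul, eval_sub, eval_C] at this
    rw [this, ← C_0, eval_map, eval₂_at_apply]
  have e1 : M.map (evalRingHom 0) * Q.map (evalRingHom 0) = f - C (f.eval 0) := by
    have := congrArg (Polynomial.map (evalRingHom 0)) h
    rw [Polynomial.map_mul, Polynomial.map_sub, Polynomial.map_map, map_C] at this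
    have hc : (evalRingHom (0 : F)).comp C = RingHom.id F := by ext; simp
    rw [this, hc, Polynomial.map_id]; rfl
  have n0 : M.eval 0 * Q.eval 0 ≠ 0 := by
    intro h0; rw [← e0, h0] at hf1; simp at hf1; omega
  have n1 : M.map (evalRingHom 0) * Q.map (evalRingHom 0) ≠ 0 := by
    intro h0; rw [← e1, h0] at hf0; simp at hf0; omega
  have hΦM : lineSubst F M ≠ 0 := by
    intro h0; apply left_ne_zero_of_mul n0; rw [← lineSubst_at_zero, h0, Polynomial.map_zero]
  have hΦQ : lineSubst F Q ≠ 0 := by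
    intro h0; apply right_ne_zero_of_mul n0; rw [← lineSubst_at_zero, h0, Polynomial.map_zero]
  have d := natDegree_lineSubst_le f
  rw [← h, map_mul, natDegree_mul hΦM hΦQ] at d
  have a1 := natDegree_map_le (f := evalRingHom (0 : F)) (p := lineSubst F M)
  have a2 := natDegree_map_le (f := evalRingHom (0 : F)) (p := lineSubst F Q)
  have a3 := natDegree_map_le (f := evalRingHom (1 : F)) (p := lineSubst F M)
  have a4 := natDegree_map_le (f := evalRingHom (1 : F)) (p := lineSubst F Q)
  rw [lineSubst_at_zero] at a1 a2
  rw [lineSubst_at_one] at a3 a4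
  have b0 := natDegree_mul (left_ne_zero_of_mul n0) (right_ne_zero_of_mul n0)
  have b1 := natDegree_mul (left_ne_zero_of_mul n1) (right_ne_zero_of_mul n1)
  rw [e0, hf1] at b0
  rw [e1, hf0] at b1
  rw [hM.natDegree_map] at a3 b1
  omega

/-! ### Expansion in powers of `h` -/

/-- The `h`-adic expansion of a polynomial, collected by powers of `X` below `natDegree h`. -/
lemma exists_comp_expansion {h : F[X]} (hm : h.Monic) (hd : 0 < h.natDegree) (p : F[X]) :
    ∃ G : ℕ → F[X], p = ∑ j ∈ Finset.range h.natDegree, (G j).comp h * X ^ j := by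
  induction hn : p.natDegree using Nat.strong_induction_on generalizing p with
  | _ n ih =>
  have hrep : ∀ s : F[X], s.natDegree < h.natDegree →
      s = ∑ j ∈ Finset.range h.natDegree, C (s.coeff j) * X ^ j :=
    fun s hs => s.as_sum_range_C_mul_X_pow' hs
  by_cases hlt : p.natDegree < h.natDegree
  · exact ⟨fun j => C (p.coeff j), by simpa using hrep p hlt⟩
  · have h1 : h ≠ 1 := by rintro rfl; simp at hd
    obtain ⟨G, hG⟩ := ih (p /ₘ h).natDegree
      (by rw [natDegree_divByMonic _ hm]; omega) _ rfl
    refine ⟨fun j => C ((p %ₘ h).coeff j) + X * G j, ?_⟩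
    conv_lhs => rw [← modByMonic_add_div p h, hG, hrep _ (natDegree_modByMonic_lt p hm h1),
      Finset.mul_sum, ← Finset.sum_add_distrib]
    refine Finset.sum_congr rfl fun j _ => ?_
    simp only [add_comp, C_comp, mul_comp, X_comp]
    ring

/-! ### Injectivity -/

lemma natDegree_dvd_of_mem_adjoin {α : Ω} (hα : Transcendental F α) {h k : F[X]} (hk : k ≠ 0)
    (hmem : aeval α k ∈ IntermediateField.adjoin F {aeval α h}) :
    h.natDegree ∣ k.natDegree := by
  have hinj := transcendental_iff_injective.mp hα
  obtain ⟨A, B, hAB⟩ := (IntermediateField.mem_adjoin_simple_iff F _).mp hmem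
  rw [← aeval_comp, ← aeval_comp] at hAB
  have hkα : aeval α k ≠ 0 := fun h0 => hk (hinj (by simpa using h0))
  have hB : aeval α (B.comp h) ≠ 0 := by
    intro h0; rw [h0, div_zero] at hAB; exact hkα hAB
  have hB' : B.comp h ≠ 0 := by intro h0; rw [h0] at hB; simp at hB
  have e : k * B.comp h = A.comp h := by
    apply hinj
    rw [map_mul, hAB, div_mul_cancel₀ _ hB]
  have := congrArg natDegree e
  rw [natDegree_mul hk hB', natDegree_comp, natDegree_comp] at this
  exact (Nat.dvd_add_left (Dvd.intro_left _ rfl)).mp (this ▸ Dvd.intro_left _ rfl)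

lemma eq_of_adjoin_eq {α : Ω} (hα : Transcendental F α) {h k : F[X]}
    (hh : h.Monic) (hh0 : h.coeff 0 = 0) (hk : k.Monic) (hk0 : k.coeff 0 = 0)
    (heq : IntermediateField.adjoin F {aeval α h} = IntermediateField.adjoin F {aeval α k}) :
    h = k := by
  have m1 : aeval α h ∈ IntermediateField.adjoin F {aeval α k} :=
    heq ▸ IntermediateField.mem_adjoin_simple_self F _
  have m2 : aeval α k ∈ IntermediateField.adjoin F {aeval α k} :=
    IntermediateField.mem_adjoin_simple_self F _
  have hdeg : h.natDegree = k.natDegree := Nat.dvd_antisymm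
    (natDegree_dvd_of_mem_adjoin hα hk.ne_zero (heq ▸ m2))
    (natDegree_dvd_of_mem_adjoin hα hh.ne_zero m1)
  by_contra hne
  have hsub : h - k ≠ 0 := sub_ne_zero.mpr hne
  have hdvd := natDegree_dvd_of_mem_adjoin hα hsub (h := k)
    (by rw [map_sub]; exact sub_mem m1 m2)
  have hlt : (h - k).degree < h.degree := degree_sub_lt_left
    (by rw [degree_eq_natDegree hh.ne_zero, degree_eq_natDegree hk.ne_zero, hdeg])
    hh.ne_zero (by rw [hh, hk])
  -- The degree of `h - k` is a multiple of `natDegree k` and smaller, so `h - k` is constant.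
  have h0 := Nat.eq_zero_of_dvd_of_lt hdvd ((natDegree_lt_natDegree hsub hlt).trans_eq hdeg)
  rw [eq_C_of_natDegree_eq_zero h0] at hsub
  simp [hh0, hk0] at hsub

/-! ### Subfields of `F(α)` are generated by polynomials in `α` -/

/-- Let `F(f(α)) ≤ E ≤ F(α)`. The element `c(α)` constructed is the constant coefficient of
`minpoly E α`: it is a polynomial in `α` since `F[α]` is integrally closed, and its degree is that
of `minpoly E α` by `natDegree_eval_zero_of_mul_eq`. -/
lemma exists_natDegree_eq_minpoly {α : Ω} (hα : Transcendental F α) (E : IntermediateField F Ω)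
    (hE : E ≤ IntermediateField.adjoin F {α}) {f : F[X]} (hm : f.Monic) (hf : 0 < f.natDegree)
    (hfE : aeval α f ∈ E) :
    IsIntegral E α ∧ ∃ c : F[X], c.natDegree = (minpoly E α).natDegree ∧ aeval α c ∈ E := by
  have hinj := transcendental_iff_injective.mp hα
  let D : E[X] := f.map (algebraMap F E) - C ⟨aeval α f, hfE⟩
  have hDm : D.Monic := by
    refine (hm.map _).sub_of_left (lt_of_le_of_lt degree_C_le ?_)
    rw [degree_map]
    exact natDegree_pos_iff_degree_pos.mp hf
  have hDα : aeval α D = 0 := by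
    simp only [D, map_sub, aeval_map_algebraMap, aeval_C]
    exact sub_self _
  refine ⟨⟨D, hDm, hDα⟩, ?_⟩
  have hint : IsIntegral E α := ⟨D, hDm, hDα⟩
  let φ : F[X] →+* Ω := (aeval α : F[X] →ₐ[F] Ω).toRingHom
  let ψ : RatFunc F →+* Ω := IsFractionRing.lift (A := F[X]) (g := φ) hinj
  have hψ : ∀ p : F[X], ψ (algebraMap F[X] (RatFunc F) p) = aeval α p :=
    fun p => IsFractionRing.lift_algebraMap hinj p
  have hψ' : ψ.comp (algebraMap F[X] (RatFunc F)) = φ := RingHom.ext hψ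
  obtain ⟨m', hm'⟩ : ∃ m' : (RatFunc F)[X],
      m'.map ψ = (minpoly E α).map (algebraMap E Ω) := by
    rw [← mem_lifts, lifts_iff_coeff_lifts]
    intro n
    rw [coeff_map]
    obtain ⟨A, B, hAB⟩ := (IntermediateField.mem_adjoin_simple_iff F _).mp
      (hE ((minpoly E α).coeff n).2)
    refine ⟨algebraMap F[X] (RatFunc F) A / algebraMap F[X] (RatFunc F) B, ?_⟩
    rw [map_div₀, hψ, hψ, ← hAB]
    rfl
  let D' : F[X][X] := f.map C - C f
  have hD' : D'.Monic := by
    refine (hm.map _).sub_of_left (lt_of_le_of_lt degree_C_le ?_)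
    rw [degree_map_eq_of_injective C_injective]
    exact natDegree_pos_iff_degree_pos.mp hf
  have hm'm : m'.Monic := by
    apply monic_of_injective ψ.injective
    rw [hm']
    exact (minpoly.monic hint).map _
  have hdvd : m' ∣ D'.map (algebraMap F[X] (RatFunc F)) := by
    rw [← map_dvd_map' ψ, hm', Polynomial.map_map, hψ']
    have : D'.map φ = D.map (algebraMap E Ω) := by
      simp only [D', D, Polynomial.map_sub, map_C, Polynomial.map_map]
      congr 2
      ext a
      simp [φ]
    rw [this]
    exact Polynomial.map_dvd (algebraMap E Ω) (minpoly.dvd E α hDα)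
  obtain ⟨M, hM⟩ := IsIntegrallyClosed.eq_map_mul_C_of_dvd (RatFunc F) hD' hdvd
  rw [hm'm.leadingCoeff, C_1, mul_one] at hM
  have hinjK : Function.Injective (algebraMap F[X] (RatFunc F)) :=
    IsFractionRing.injective _ _
  have hMm : M.Monic := monic_of_injective hinjK (hM ▸ hm'm)
  have hMD : M ∣ D' := (map_dvd_map _ hinjK hMm).mp (hM ▸ hdvd)
  obtain ⟨Q, hQ⟩ := hMD
  refine ⟨M.eval 0, ?_, ?_⟩
  · rw [natDegree_eval_zero_of_mul_eq hf hMm hQ.symm,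
      ← natDegree_map_eq_of_injective hinjK M, hM,
      ← natDegree_map_eq_of_injective ψ.injective m', hm',
      natDegree_map_eq_of_injective (algebraMap E Ω).injective]
  · have : aeval α (M.eval 0) = algebraMap E Ω ((minpoly E α).coeff 0) := by
      rw [← coeff_map, ← hm', ← hM, Polynomial.map_map, hψ', coeff_map, coeff_zero_eq_eval_zero]
      rfl
    rw [this]
    exact ((minpoly E α).coeff 0).2

lemma eq_zero_of_natDegree_lt_minpoly {α : Ω} {E : IntermediateField F Ω} {p : E[X]}
    (hp : aeval α p = 0) (hlt : p.natDegree < (minpoly E α).natDegree) : p = 0 := by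
  by_contra h0
  exact absurd (natDegree_le_natDegree (minpoly.degree_le_of_ne_zero E α h0 hp)) (by omega)

/-- If `h(α) ∈ E` and `natDegree h = [E(α) : E]`, every polynomial taking a value in `E` at `α` is a
polynomial in `h`: its `h`-adic expansion gives a relation over `E` of degree `< [E(α) : E]`. -/
lemma exists_eq_comp {α : Ω} (hα : Transcendental F α) {E : IntermediateField F Ω}
    {h : F[X]} (hm : h.Monic) (hd : 0 < h.natDegree)
    (hdeg : h.natDegree = (minpoly E α).natDegree) (hE : aeval α h ∈ E)
    {f : F[X]} (hfE : aeval α f ∈ E) : ∃ g : F[X], f = g.comp h := by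
  have hinj := transcendental_iff_injective.mp hα
  obtain ⟨G, hG⟩ := exists_comp_expansion hm hd f
  let b : E := ⟨aeval α h, hE⟩
  let p : E[X] := ∑ j ∈ Finset.range h.natDegree, C (aeval b (G j)) * X ^ j
  have hb : ∀ q : F[X], algebraMap E Ω (aeval b q) = aeval α (q.comp h) := by
    intro q
    rw [← aeval_algebraMap_apply, aeval_comp]
    rfl
  have hroot : aeval α (p - C ⟨aeval α f, hfE⟩) = 0 := by
    rw [map_sub, aeval_C, sub_eq_zero]
    change _ = aeval α f
    conv_rhs => rw [hG]
    simp only [p, map_sum, map_mul, aeval_C, map_pow, aeval_X, hb]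
  have hpdeg : p.natDegree < h.natDegree := by
    refine lt_of_le_of_lt (natDegree_sum_le_of_forall_le (n := h.natDegree - 1) _ _ ?_) (by omega)
    intro j hj
    have := Finset.mem_range.mp hj
    exact (natDegree_C_mul_X_pow_le _ _).trans (by omega)
  have hz := eq_zero_of_natDegree_lt_minpoly hroot
    (by rw [natDegree_sub_C, ← hdeg]; exact hpdeg)
  refine ⟨G 0, ?_⟩
  conv_lhs => rw [hG]
  rw [Finset.sum_eq_single_of_mem 0 (Finset.mem_range.mpr hd)]
  · simp
  · intro j hj hj0
    have hc := congrArg (fun q => coeff q j) hz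
    simp only [p, coeff_sub, finsetSum_coeff, coeff_C_mul_X_pow, coeff_C, hj0, if_false,
      Finset.sum_ite_eq, hj, if_true, sub_zero, coeff_zero] at hc
    have : (G j).comp h = 0 := hinj (by rw [← hb, hc, map_zero, map_zero])
    rw [this, zero_mul]

/-- If `h(α) ∈ E` and `natDegree h = [E(α) : E]`, where `E ≤ F(α)`, then `F(h(α)) = E`:
reducing modulo `h(x) - h(α)` writes `e ∈ E` as `R(α)` with `R` over `F(h(α))` of degree less than
`natDegree h`, which forces `R` to be the constant `e`. -/
lemma adjoin_eq_of_natDegree_eq {α : Ω} {E : IntermediateField F Ω}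
    (hEα : E ≤ IntermediateField.adjoin F {α})
    {h : F[X]} (hm : h.Monic) (hd : 0 < h.natDegree)
    (hdeg : h.natDegree = (minpoly E α).natDegree) (hE : aeval α h ∈ E) :
    IntermediateField.adjoin F {aeval α h} = E := by
  have hle : IntermediateField.adjoin F {aeval α h} ≤ E :=
    IntermediateField.adjoin_simple_le_iff.mpr hE
  refine le_antisymm hle fun e he => ?_
  have hmem := IntermediateField.mem_adjoin_simple_self F (aeval α h)
  generalize IntermediateField.adjoin F {aeval α h} = E' at hle hmem ⊢
  let D : E'[X] := h.map (algebraMap F E') - C ⟨aeval α h, hmem⟩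
  have hDm : D.Monic := by
    refine (hm.map _).sub_of_left (lt_of_le_of_lt degree_C_le ?_)
    rw [degree_map]
    exact natDegree_pos_iff_degree_pos.mp hd
  have hDα : aeval α D = 0 := by
    simp only [D, map_sub, aeval_map_algebraMap, aeval_C]
    exact sub_self _
  have hDdeg : D.natDegree = h.natDegree := by
    simp only [D, natDegree_sub_C, natDegree_map]
  have hD1 : D ≠ 1 := by intro h1; rw [h1] at hDdeg; simp at hDdeg; omega
  obtain ⟨P, hP⟩ : ∃ P : E'[X], aeval α P = e := by
    have h1 : IntermediateField.adjoin F {α} ≤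
        (IntermediateField.adjoin E' {α}).restrictScalars F :=
      IntermediateField.adjoin_simple_le_iff.mpr
        (IntermediateField.mem_adjoin_simple_self E' α)
    have h2 : e ∈ IntermediateField.adjoin E' {α} := h1 (hEα he)
    rw [← IntermediateField.mem_toSubalgebra,
      IntermediateField.adjoin_simple_toSubalgebra_of_isAlgebraic ⟨D, hDm.ne_zero, hDα⟩,
      Algebra.adjoin_singleton_eq_range_aeval] at h2
    exact h2
  let R := P %ₘ D
  have hR : aeval α R = e := by
    rw [← hP]
    conv_rhs => rw [← modByMonic_add_div P D, map_add, map_mul, hDα, zero_mul, add_zero]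
  have hRdeg : R.natDegree < (minpoly E α).natDegree := by
    rw [← hdeg, ← hDdeg]
    exact natDegree_modByMonic_lt P hDm hD1
  -- Over `E`, the polynomial `R - e` has too small a degree to vanish at `α`, so `e = R(0)`.
  let ι : E' →ₐ[F] E := IntermediateField.inclusion hle
  have hroot : aeval α (R.map ι.toRingHom - C ⟨e, he⟩) = 0 := by
    rw [map_sub, aeval_C, sub_eq_zero]
    change _ = e
    rw [← hR, aeval_def, eval₂_map]
    rfl
  have hz := eq_zero_of_natDegree_lt_minpoly hroot
    (by rw [natDegree_sub_C]; exact lt_of_le_of_lt natDegree_map_le hRdeg)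
  have hc := congrArg (fun q => coeff q 0) hz
  simp only [coeff_sub, coeff_map, coeff_C_zero, coeff_zero, sub_eq_zero] at hc
  have : ((R.coeff 0 : E') : Ω) = e := congrArg (algebraMap E Ω) hc
  exact this ▸ (R.coeff 0).2

lemma exists_normal_of_le_adjoin {α : Ω} (hα : Transcendental F α) (E : IntermediateField F Ω)
    (hE : E ≤ IntermediateField.adjoin F {α}) {f : F[X]} (hf : 0 < f.natDegree)
    (hfE : aeval α f ∈ E) :
    ∃ h : F[X], h.Monic ∧ h.coeff 0 = 0 ∧ (∃ g : F[X], f = g.comp h) ∧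
      IntermediateField.adjoin F {aeval α h} = E := by
  have hf0 : f ≠ 0 := by rintro rfl; simp at hf
  have hscal : ∀ (p : F[X]) (a : F), aeval α p ∈ E → aeval α (p * C a) ∈ E := by
    intro p a hp
    rw [map_mul, aeval_C]
    exact mul_mem hp (E.algebraMap_mem a)
  obtain ⟨hint, c, hc, hcE⟩ := exists_natDegree_eq_minpoly hα E hE
    (monic_mul_leadingCoeff_inv hf0)
    (by rwa [natDegree_mul_leadingCoeff_inv _ hf0]) (hscal _ _ hfE)
  let c' := c - C (c.coeff 0)
  have hc'd : c'.natDegree = (minpoly E α).natDegree := by rw [natDegree_sub_C, hc]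
  have hpos := minpoly.natDegree_pos hint
  have hc'0 : c' ≠ 0 := by intro h0; rw [h0] at hc'd; simp at hc'd; omega
  have hc'E : aeval α c' ∈ E := by
    rw [map_sub, aeval_C]
    exact sub_mem hcE (E.algebraMap_mem _)
  have hm := monic_mul_leadingCoeff_inv hc'0
  have hd := (natDegree_mul_leadingCoeff_inv c' hc'0).trans hc'd
  have hhE := hscal _ c'.leadingCoeff⁻¹ hc'E
  refine ⟨c' * C c'.leadingCoeff⁻¹, hm, ?_, ?_, ?_⟩
  · simp [c']
  · exact exists_eq_comp hα hm (hd ▸ hpos) hd hhE hfE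
  · exact adjoin_eq_of_natDegree_eq hE hm (hd ▸ hpos) hd hhE

/-! ### From `F` to `F(t)` -/

/-- If `t` is a polynomial in `β`, then `F(t)(β) = F(β)`. -/
lemma restrictScalars_adjoin_eq [Algebra (RatFunc F) Ω] [IsScalarTower F (RatFunc F) Ω]
    {β : Ω} {g : F[X]} (hg : aeval β g = algebraMap (RatFunc F) Ω RatFunc.X) :
    (IntermediateField.adjoin (RatFunc F) {β}).restrictScalars F =
      IntermediateField.adjoin F {β} := by
  apply le_antisymm
  · have hmem : ∀ p : F[X], algebraMap (RatFunc F) Ω (algebraMap F[X] (RatFunc F) p) ∈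
        IntermediateField.adjoin F {β} := by
      intro p
      have : algebraMap (RatFunc F) Ω (algebraMap F[X] (RatFunc F) p) =
          aeval β (p.comp g) := by
        rw [aeval_comp, hg, aeval_algebraMap_apply, ← RatFunc.algebraMap_X,
          aeval_algebraMap_apply, aeval_X_left_apply]
      rw [this]
      exact (IntermediateField.mem_adjoin_simple_iff F _).mpr ⟨p.comp g, 1, by simp⟩
    let S : IntermediateField (RatFunc F) Ω :=
      (IntermediateField.adjoin F {β}).toSubfield.toIntermediateField (by
        intro c
        rw [← RatFunc.num_div_denom c, map_div₀]
        exact div_mem (hmem _) (hmem _))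
    have hS : IntermediateField.adjoin (RatFunc F) {β} ≤ S :=
      IntermediateField.adjoin_simple_le_iff.mpr
        (IntermediateField.mem_adjoin_simple_self F β)
    exact fun x hx => hS hx
  · exact IntermediateField.adjoin_simple_le_iff.mpr
      (IntermediateField.mem_adjoin_simple_self (RatFunc F) β)

end Generic


/-- **Theorem (decompositions vs. intermediate fields).**
Let `F` be a field, `f ∈ F[x]` nonconstant with `f' ≠ 0`, `t` transcendental over `F`,
and `α` a root of `f − t` in an algebraic closure of `F(t)`.  The map `h ↦ F(h(α))` is a
bijection from the set `L` of normal polynomials `h` (monic with constant term `0`) such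
that `f = g ∘ h` for some `g ∈ F[x]`, onto the set `M` of intermediate fields of
`F(α)/F(t)`. -/
theorem decomposition_intermediateField_bijection
    (F : Type*) [Field F] (f : F[X]) (hf : 0 < f.natDegree)
    (hf' : derivative f ≠ 0)
    (α : FuncFieldClosure F)
    (hα : aeval α f = algebraMap (RatFunc F) (FuncFieldClosure F) RatFunc.X) :
    Set.BijOn
      (fun h : F[X] => IntermediateField.adjoin (RatFunc F) {aeval α h})
      {h : F[X] | h.Monic ∧ h.coeff 0 = 0 ∧ ∃ g : F[X], f = g.comp h}
      {E : IntermediateField (RatFunc F) (FuncFieldClosure F) |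
        E ≤ IntermediateField.adjoin (RatFunc F) {α}} := by
  have htr : Transcendental F α := by
    refine ((transcendental_aeval_iff (f := f)).mp ?_).1
    rw [hα, transcendental_algebraMap_iff
      (algebraMap (RatFunc F) (FuncFieldClosure F)).injective]
    exact RatFunc.transcendental_X
  have hadj : ∀ h : F[X], (∃ g : F[X], f = g.comp h) →
      (IntermediateField.adjoin (RatFunc F) {aeval α h}).restrictScalars F =
        IntermediateField.adjoin F {aeval α h} := by
    rintro h ⟨g, hg⟩
    exact restrictScalars_adjoin_eq (g := g) (by rw [← aeval_comp, ← hg, hα])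
  refine ⟨?_, ?_, ?_⟩
  · rintro h -
    refine IntermediateField.adjoin_simple_le_iff.mpr ?_
    exact (IntermediateField.mem_adjoin_simple_iff (RatFunc F) _).mpr
      ⟨h.map (algebraMap F (RatFunc F)), 1, by rw [aeval_map_algebraMap]; simp⟩
  · rintro h ⟨hh, hh0, hhf⟩ k ⟨hk, hk0, hkf⟩ heq
    refine eq_of_adjoin_eq htr hh hh0 hk hk0 ?_
    rw [← hadj h hhf, ← hadj k hkf]
    exact congrArg (IntermediateField.restrictScalars F) heq
  · intro E hE
    obtain ⟨h, hm, h0, hg, hadjE⟩ := exists_normal_of_le_adjoin htr (E.restrictScalars F)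
      (by
        rw [← restrictScalars_adjoin_eq hα]
        exact fun x hx => hE hx) hf
      (by
        rw [hα]
        exact E.algebraMap_mem RatFunc.X)
    refine ⟨h, ⟨hm, h0, hg⟩, IntermediateField.restrictScalars_injective F ?_⟩
    exact (hadj h hg).trans hadjE
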